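/- arXiv:2011.01178 — 6 statements merged into one kernel-verified Lean document; each statement's English description precedes it below -/
import Mathlib

section
/- For every preference profile and every nonempty linearly constrained feasible set ΔC, there exists a feasible random assignment x ∈ ΔC that is simultaneously constrained ordinally efficient and envy-free among agents of the same type. -/
open Finset
open scoped Classical

/-- `x` is a random assignment: probabilities in `[0,1]`, each agent's row sums to `1`,
and each object's column sum is at most its quota. -/
def IsRandomAssignment {N O : Type*} [Fintype N] [Fintype O]
    (q : O → ℕ) (x : N → O → ℝ) : Prop :=
  (∀ i o, 0 ≤ x i o ∧ x i o ≤ 1) ∧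
  (∀ i : N, ∑ o, x i o = 1) ∧
  (∀ o : O, ∑ i, x i o ≤ (q o : ℝ))

/-- Cumulative share of objects weakly preferred (w.r.t. `pref`) to `o` in allocation `xi`. -/
noncomputable def upperSum {O : Type*} [Fintype O]
    (pref : O → O → Prop) (xi : O → ℝ) (o : O) : ℝ :=
  ∑ o' ∈ Finset.univ.filter (fun o' => pref o' o), xi o'

/-- `xi` (first-order) stochastically dominates `yi` with respect to `pref`. -/
def SDom {O : Type*} [Fintype O] (pref : O → O → Prop) (xi yi : O → ℝ) : Prop :=
  ∀ o, upperSum pref yi o ≤ upperSum pref xi o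

/-- Strict stochastic dominance. -/
def StrictSDom {O : Type*} [Fintype O] (pref : O → O → Prop) (xi yi : O → ℝ) : Prop :=
  SDom pref xi yi ∧ ∃ o, upperSum pref yi o < upperSum pref xi o

/-- Feasibility: random assignment satisfying the linear constraints `A x ≤ b`. -/
def Feasible {N O : Type*} [Fintype N] [Fintype O]
    (q : O → ℕ) {m : ℕ} (A : Fin m → N → O → ℝ) (b : Fin m → ℝ)
    (x : N → O → ℝ) : Prop :=
  IsRandomAssignment q x ∧ ∀ c, ∑ i, ∑ o, A c i o * x i o ≤ b c

/-- Agents `i` and `j` are of the same type w.r.t. the constraint matrix `A`. -/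
def SameType {N O : Type*} {m : ℕ} (A : Fin m → N → O → ℝ) (i j : N) : Prop :=
  ∀ c o, A c i o = A c j o

/-!
Choose a feasible assignment whose vector of cumulative shares `upperSum (pref i) (x i) o`, indexed
by agent-object pairs, is maximal in the leximin order. It exists: the feasible set is compact,
and leximin compares, lexicographically in `k`, the sums of the `k` smallest coordinates, which are
continuous. A Pareto improvement of this vector is a leximin improvement, whence constrained ordinal
efficiency. If agent `i` envies agent `j` of the same type at the object `o`, where the cumulative
share of `i` is `t`, then `j` can give `i` a little of an object `i` likes at least as much as `o`,
in exchange for an object `i` likes strictly less than `o`. If the object given up is the worst for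
`j` among those `j` could give, the cumulative shares that `j` loses are all larger than `t` and
remain so after a small trade: only shares above `t` fall, while the share of `i` at `o`, equal to
`t`, rises. This contradicts leximin maximality.
-/

theorem exists_mem_forall_toLex_le {X γ : Type*} [TopologicalSpace X] [LinearOrder γ] {n : ℕ}
    {f : Fin n → X → γ} {S : Set X} (hS : IsCompact S) (hne : S.Nonempty)
    (hf : ∀ k, UpperSemicontinuousOn (f k) S) :
    ∃ x ∈ S, ∀ y ∈ S, toLex (fun k => f k y) ≤ toLex fun k => f k x := by
  induction n generalizing S with
  | zero =>
    obtain ⟨x, hx⟩ := hne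
    exact ⟨x, hx, fun y _ => (Subsingleton.elim (α := Lex (Fin 0 → γ)) _ _).le⟩
  | succ n ih =>
    obtain ⟨w, hw, hw_max⟩ := (hf 0).exists_isMaxOn hne hS
    obtain ⟨x, ⟨hxS, hwx⟩, hx_max⟩ :=
      ih (f := fun k => f k.succ) ((hf 0).isCompact_inter_preimage_Ici hS (f 0 w))
        ⟨w, hw, le_refl (f 0 w)⟩ fun k => (hf k.succ).mono Set.inter_subset_left
    refine ⟨x, hxS, fun y hy => le_of_not_gt ?_⟩
    rintro ⟨k, heq, hlt⟩
    induction k using Fin.cases with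
    | zero => exact (hlt.trans_le ((hw_max hy).trans hwx)).false
    | succ k =>
      have hwy : f 0 w ≤ f 0 y := hwx.trans (heq 0 k.succ_pos).le
      exact (hx_max y ⟨hy, hwy⟩).not_gt ⟨k, fun l hl => heq l.succ (Fin.succ_lt_succ_iff.2 hl), hlt⟩

theorem toLex_lt_toLex_of_forall_le_of_lt {κ : Type*} {β : κ → Type*} [LinearOrder κ]
    [WellFoundedLT κ] [∀ i, LinearOrder (β i)] {x y : ∀ i, β i} {k : κ}
    (hle : ∀ l ≤ k, x l ≤ y l) (hlt : x k < y k) : toLex x < toLex y := by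
  refine lt_of_not_ge fun hyx => ?_
  rcases hyx.eq_or_lt with heq | ⟨l, heq, hl⟩
  · exact hlt.ne' (congrFun (toLex.injective heq) k)
  · rcases le_or_gt l k with hlk | hkl
    · exact (hle l hlk).not_gt hl
    · exact hlt.ne' (heq k hkl)

section Leximin

variable {ι α : Type*} [LinearOrder α] {u v : ι → α} {t : α}

/-- `v` improves on `u` at the level `t`: some coordinate of `u` which is at most `t` rises, and
every coordinate that falls stays above `t`. -/
def ImprovesAtLevel (t : α) (u v : ι → α) : Prop :=
  (∀ a, u a ≤ v a ∨ t < v a) ∧ ∃ a, u a ≤ t ∧ u a < v a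

theorem ImprovesAtLevel.min_le (h : ImprovesAtLevel t u v) (a : ι) : min (u a) t ≤ v a :=
  (h.1 a).elim (min_le_left _ _).trans fun hta => (min_le_right _ _).trans hta.le

theorem ImprovesAtLevel.exists_min_lt [Fintype ι] (h : ImprovesAtLevel t u v) {T : Finset ι}
    (hT : #T = #{a | u a ≤ t}) : ∃ a ∈ T, min (u a) t < v a := by
  obtain ⟨a, hat, hav⟩ := h.2
  by_cases haT : a ∈ T
  · exact ⟨a, haT, (min_le_left _ _).trans_lt hav⟩
  · have hTL : ¬ T ⊆ ({a | u a ≤ t} : Finset ι) := fun hTL =>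
      haT (eq_of_subset_of_card_le hTL hT.ge ▸ mem_filter.2 ⟨mem_univ a, hat⟩)
    obtain ⟨c, hcT, hc⟩ := not_subset.1 hTL
    have htc : t < u c := by simpa using hc
    exact ⟨c, hcT, (min_le_right _ _).trans_lt ((h.1 c).elim htc.trans_le id)⟩

variable [Fintype ι]

/-- The sum of the `k` smallest coordinates of `u`, computed as the minimum of the sums of `u` over
all `k`-element index sets; `k` is bounded so that such index sets exist. -/
def sumSmallest [AddCommMonoid α] (k : Fin (Fintype.card ι + 1)) (u : ι → α) : α :=
  (powersetCard k univ).inf' (powersetCard_nonempty.2 (Nat.lt_succ_iff.1 k.2))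
    fun T => ∑ a ∈ T, u a

/-- The key of the leximin order: `u` is leximin-below `v` iff `leximinKey u ≤ leximinKey v`.
Comparing the sums of the `k` smallest coordinates lexicographically in `k` amounts to comparing
the increasingly sorted vectors lexicographically. -/
def leximinKey [AddCommMonoid α] (u : ι → α) : Lex (Fin (Fintype.card ι + 1) → α) :=
  toLex fun k => sumSmallest k u

theorem continuous_sumSmallest [AddCommMonoid α] [TopologicalSpace α] [ContinuousAdd α]
    [ContinuousInf α] (k : Fin (Fintype.card ι + 1)) :
    Continuous (sumSmallest k : (ι → α) → α) :=
  Continuous.finset_inf'_apply _ fun _ _ => by fun_prop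

theorem sumSmallest_le_sum [AddCommMonoid α] {k : Fin (Fintype.card ι + 1)} {T : Finset ι}
    (hT : #T = k) (u : ι → α) : sumSmallest k u ≤ ∑ a ∈ T, u a :=
  inf'_le (fun T => ∑ a ∈ T, u a) (mem_powersetCard_univ.2 hT)

theorem exists_card_eq_sumSmallest_eq_sum [AddCommMonoid α] (k : Fin (Fintype.card ι + 1))
    (u : ι → α) : ∃ T : Finset ι, #T = k ∧ sumSmallest k u = ∑ a ∈ T, u a := by
  obtain ⟨T, hT, hsum⟩ := exists_mem_eq_inf' (powersetCard_nonempty.2 (Nat.lt_succ_iff.1 k.2))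
    fun T : Finset ι => ∑ a ∈ T, u a
  exact ⟨T, mem_powersetCard_univ.1 hT, hsum⟩

variable [AddCommGroup α] [IsOrderedAddMonoid α]

theorem sumSmallest_le_sum_min {k : Fin (Fintype.card ι + 1)} (hk : k ≤ #{a | u a ≤ t})
    {T : Finset ι} (hT : #T = k) : sumSmallest k u ≤ ∑ a ∈ T, min (u a) t := by
  obtain ⟨S, hTS, hSL, hS⟩ := exists_subsuperset_card_eq
    (filter_subset_filter (fun a => u a ≤ t) (subset_univ T))
    ((card_filter_le T _).trans hT.le) hk
  have hS_le : ∀ a ∈ S, u a ≤ t := fun a ha => (mem_filter.1 (hSL ha)).2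
  -- Measured as shortfalls below `t`, the coordinates truncated at `t` contribute nothing.
  have hshortfall : ∑ a ∈ T, (t - min (u a) t) ≤ ∑ a ∈ S, (t - u a) :=
    calc ∑ a ∈ T, (t - min (u a) t) = ∑ a ∈ T with u a ≤ t, (t - u a) := by
          rw [sum_filter]
          refine sum_congr rfl fun a _ => ?_
          split_ifs with ha
          · rw [min_eq_left ha]
          · rw [min_eq_right (not_le.1 ha).le, sub_self]
      _ ≤ ∑ a ∈ S, (t - u a) :=
          sum_le_sum_of_subset_of_nonneg hTS fun a ha _ => sub_nonneg.2 (hS_le a ha)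
  rw [sum_sub_distrib, sum_sub_distrib, sum_const, sum_const, hS, hT] at hshortfall
  exact (sumSmallest_le_sum hS u).trans ((sub_le_sub_iff_left _).1 hshortfall)

theorem ImprovesAtLevel.leximinKey_lt (h : ImprovesAtLevel t u v) :
    leximinKey u < leximinKey v := by
  let k : Fin (Fintype.card ι + 1) := ⟨#{a | u a ≤ t}, Nat.lt_succ_iff.2 (card_le_univ _)⟩
  refine toLex_lt_toLex_of_forall_le_of_lt (k := k) (fun l hl => ?_) ?_
  · obtain ⟨T, hT, hv⟩ := exists_card_eq_sumSmallest_eq_sum l v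
    rw [hv]
    exact (sumSmallest_le_sum_min hl hT).trans (sum_le_sum fun a _ => h.min_le a)
  · obtain ⟨T, hT, hv⟩ := exists_card_eq_sumSmallest_eq_sum k v
    rw [hv]
    exact (sumSmallest_le_sum_min le_rfl hT).trans_lt
      (sum_lt_sum (fun a _ => h.min_le a) (h.exists_min_lt hT))

theorem leximinKey_strictMono : StrictMono (leximinKey : (ι → α) → _) := fun u v huv => by
  obtain ⟨hle, a, hlt⟩ := Pi.lt_def.1 huv
  exact ImprovesAtLevel.leximinKey_lt (t := u a) ⟨fun c => Or.inl (hle c), a, le_rfl, hlt⟩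

end Leximin

section UpperSum

variable {O : Type*} [Fintype O] {r : O → O → Prop}

theorem upperSum_add (w z : O → ℝ) (p : O) :
    upperSum r (w + z) p = upperSum r w p + upperSum r z p :=
  sum_add_distrib

theorem upperSum_sub (w z : O → ℝ) (p : O) :
    upperSum r (w - z) p = upperSum r w p - upperSum r z p :=
  sum_sub_distrib _ _

theorem upperSum_single (o : O) (δ : ℝ) (p : O) :
    upperSum r (Pi.single o δ) p = if r o p then δ else 0 := by
  simp [upperSum]

theorem sDom_add_single_sub_single (htrans : ∀ a b c, r a b → r b c → r a c) (w : O → ℝ)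
    {o₁ o₂ : O} (h : r o₁ o₂) {δ : ℝ} (hδ : 0 ≤ δ) :
    SDom r (w + (Pi.single o₁ δ - Pi.single o₂ δ)) w := by
  intro p
  rw [upperSum_add, upperSum_sub, upperSum_single, upperSum_single, le_add_iff_nonneg_right,
    sub_nonneg]
  by_cases hp : r o₂ p
  · rw [if_pos hp, if_pos (htrans o₁ o₂ p h hp)]
  · rw [if_neg hp]
    exact ite_nonneg hδ le_rfl

theorem upperSum_le_sum {w : O → ℝ} (hw : ∀ a, 0 ≤ w a) (p : O) : upperSum r w p ≤ ∑ a, w a :=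
  sum_le_sum_of_subset_of_nonneg (filter_subset _ _) fun a _ _ => hw a

theorem exists_not_rel_and_pos_of_upperSum_lt_sum {w : O → ℝ} {p : O}
    (h : upperSum r w p < ∑ a, w a) : ∃ a, ¬ r a p ∧ 0 < w a := by
  rw [← sum_filter_add_sum_filter_not univ fun a => r a p] at h
  have hpos : ∑ a with ¬ r a p, (0 : ℝ) < ∑ a with ¬ r a p, w a :=
    sum_const_zero.trans_lt (pos_of_lt_add_right h)
  obtain ⟨a, ha, hwa⟩ := exists_lt_of_sum_lt hpos
  exact ⟨a, (mem_filter.1 ha).2, hwa⟩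

theorem exists_mem_pos_forall_sum_le_upperSum (hcomplete : ∀ a b, r a b ∨ r b a)
    (htrans : ∀ a b c, r a b → r b c → r a c) {w : O → ℝ} (hw : ∀ a, 0 ≤ w a) {U : Finset O}
    (hU : 0 < ∑ a ∈ U, w a) :
    ∃ o ∈ U, 0 < w o ∧ ∀ p, r o p → ∑ a ∈ U, w a ≤ upperSum r w p := by
  obtain ⟨a₀, ha₀, hwa₀⟩ := (sum_pos_iff_of_nonneg fun a _ => hw a).1 hU
  have : Nonempty {a // a ∈ U ∧ 0 < w a} := ⟨⟨a₀, ha₀, hwa₀⟩⟩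
  have : IsTrans O r := ⟨htrans⟩
  have hdir : Directed r (Subtype.val : {a // a ∈ U ∧ 0 < w a} → O) := fun a c =>
    (hcomplete a c).elim (fun h => ⟨c, h, (hcomplete c c).elim id id⟩)
      fun h => ⟨a, (hcomplete a a).elim id id, h⟩
  obtain ⟨⟨o, hoU, hwo⟩, hworst⟩ := hdir.finset_le univ
  refine ⟨o, hoU, hwo, fun p hop => ?_⟩
  rw [← sum_filter_of_ne fun a _ ha => (hw a).lt_of_ne' ha]
  refine sum_le_sum_of_subset_of_nonneg (fun a ha => ?_) fun a _ _ => hw a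
  exact mem_filter.2
    ⟨mem_univ a, htrans a o p (hworst ⟨a, mem_filter.1 ha⟩ (mem_univ _)) hop⟩

end UpperSum

section Transfer

variable {N O : Type*} {x : N → O → ℝ} {i j : N} {d : O → ℝ}

/-- The assignment obtained from `x` when agent `j` hands over to agent `i` the bundle `d` of
shares, a negative entry of `d` being a share that moves from `i` to `j`. -/
noncomputable def transfer (x : N → O → ℝ) (i j : N) (d : O → ℝ) : N → O → ℝ :=
  x + Pi.single i d - Pi.single j d

theorem transfer_self : transfer x i i d = x :=
  add_sub_cancel_right x _

theorem transfer_apply_left (hij : i ≠ j) : transfer x i j d i = x i + d := by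
  simp [transfer, hij]

theorem transfer_apply_right (hij : i ≠ j) : transfer x i j d j = x j - d := by
  simp [transfer, hij.symm]

theorem transfer_apply_of_ne {k : N} (hki : k ≠ i) (hkj : k ≠ j) : transfer x i j d k = x k := by
  simp [transfer, hki, hkj]

variable [Fintype N] [Fintype O]

theorem sum_mul_transfer {B : N → O → ℝ} (hB : B i = B j) :
    ∑ k, ∑ o, B k o * transfer x i j d k o = ∑ k, ∑ o, B k o * x k o := by
  have hsingle (l : N) :
      ∑ k, ∑ o, B k o * (Pi.single l d : N → O → ℝ) k o = ∑ o, B l o * d o := by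
    rw [Fintype.sum_eq_single l fun k hk => by simp [hk], Pi.single_eq_same]
  simp only [transfer, Pi.add_apply, Pi.sub_apply, mul_add, mul_sub, sum_add_distrib,
    sum_sub_distrib, hsingle, hB, add_sub_cancel_right]

theorem isRandomAssignment_transfer {q : O → ℕ} (hx : IsRandomAssignment q x)
    (hd : ∑ o, d o = 0) (hi : 0 ≤ x i + d) (hj : d ≤ x j) :
    IsRandomAssignment q (transfer x i j d) := by
  obtain rfl | hij := eq_or_ne i j
  · rwa [transfer_self]
  obtain ⟨hbounds, hrow, hcol⟩ := hx
  have hrow_transfer (k : N) : 0 ≤ transfer x i j d k ∧ ∑ o, transfer x i j d k o = 1 := by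
    by_cases hki : k = i
    · subst hki
      rw [transfer_apply_left hij]
      exact ⟨hi, by simp only [Pi.add_apply, sum_add_distrib, hrow, hd, add_zero]⟩
    by_cases hkj : k = j
    · subst hkj
      rw [transfer_apply_right hij]
      exact ⟨sub_nonneg.2 hj, by simp only [Pi.sub_apply, sum_sub_distrib, hrow, hd, sub_zero]⟩
    · rw [transfer_apply_of_ne hki hkj]
      exact ⟨fun o => (hbounds k o).1, hrow k⟩
  refine ⟨fun k o => ⟨(hrow_transfer k).1 o, ?_⟩, fun k => (hrow_transfer k).2, fun o => ?_⟩
  · rw [← (hrow_transfer k).2]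
    exact single_le_sum (fun p _ => (hrow_transfer k).1 p) (mem_univ o)
  · have hcol_eq := sum_mul_transfer (x := x) (d := d) (i := i) (j := j)
      (B := fun _ => Pi.single o 1) rfl
    simp only [Pi.single_apply, ite_mul, one_mul, zero_mul, sum_ite_eq', mem_univ, if_true]
      at hcol_eq
    exact hcol_eq.trans_le (hcol o)

theorem feasible_transfer {q : O → ℕ} {m : ℕ} {A : Fin m → N → O → ℝ} {b : Fin m → ℝ}
    (hx : Feasible q A b x) (hij : SameType A i j) (hd : ∑ o, d o = 0) (hi : 0 ≤ x i + d)
    (hj : d ≤ x j) : Feasible q A b (transfer x i j d) :=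
  ⟨isRandomAssignment_transfer hx.1 hd hi hj, fun c =>
    (sum_mul_transfer (funext fun o => hij c o)).trans_le (hx.2 c)⟩

theorem feasible_transfer_single_sub_single {q : O → ℕ} {m : ℕ} {A : Fin m → N → O → ℝ}
    {b : Fin m → ℝ} (hx : Feasible q A b x) (hij : SameType A i j) {o₁ o₂ : O} {δ : ℝ} (hδ : 0 ≤ δ)
    (h₁ : δ ≤ x j o₁) (h₂ : δ ≤ x i o₂) :
    Feasible q A b (transfer x i j (Pi.single o₁ δ - Pi.single o₂ δ)) := by
  have hsingle_le {k : N} {o : O} (h : δ ≤ x k o) : Pi.single o δ ≤ x k :=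
    update_le_iff.2 ⟨h, fun p _ => (hx.1.1 k p).1⟩
  have hsingle_nonneg (o : O) : 0 ≤ (Pi.single o δ : O → ℝ) := Pi.single_nonneg.2 hδ
  refine feasible_transfer hx hij (by simp) ?_
    ((sub_le_self _ (hsingle_nonneg o₂)).trans (hsingle_le h₁))
  rw [add_sub_left_comm]
  exact add_nonneg (hsingle_nonneg o₁) (sub_nonneg.2 (hsingle_le h₂))

end Transfer

section Assignment

variable {N O : Type*} [Fintype O]

/-- The vector of cumulative shares of an assignment, indexed by agent-object pairs; stochastic
dominance for all agents is the pointwise order on these vectors. -/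
noncomputable def cumulativeShares (pref : N → O → O → Prop) (x : N → O → ℝ) : N × O → ℝ :=
  fun a => upperSum (pref a.1) (x a.1) a.2

theorem continuous_cumulativeShares (pref : N → O → O → Prop) :
    Continuous (cumulativeShares pref) := by
  unfold cumulativeShares upperSum
  fun_prop

theorem improvesAtLevel_transfer {pref : N → O → O → Prop} {x : N → O → ℝ} {i j : N} (hij : i ≠ j)
    {o o₁ o₂ : O} {δ : ℝ} (hδ : 0 < δ) (htrans : ∀ a b c, pref i a b → pref i b c → pref i a c)
    (ho₁ : pref i o₁ o) (ho₂ : ¬ pref i o₂ o) (ho₁₂ : pref i o₁ o₂)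
    (hj : ∀ p, pref j o₁ p → upperSum (pref i) (x i) o + δ < upperSum (pref j) (x j) p) :
    ImprovesAtLevel (upperSum (pref i) (x i) o) (cumulativeShares pref x)
      (cumulativeShares pref (transfer x i j (Pi.single o₁ δ - Pi.single o₂ δ))) := by
  simp only [ImprovesAtLevel, cumulativeShares, Prod.forall]
  refine ⟨fun k p => ?_, (i, o), le_rfl, ?_⟩
  · by_cases hki : k = i
    · subst hki
      rw [transfer_apply_left hij]
      exact Or.inl (sDom_add_single_sub_single htrans (x k) ho₁₂ hδ.le p)
    by_cases hkj : k = j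
    · subst hkj
      rw [transfer_apply_right hij, upperSum_sub, upperSum_sub, upperSum_single, upperSum_single]
      by_cases hp : pref k o₁ p
      · right
        have := hj p hp
        split_ifs <;> linarith
      · left
        split_ifs <;> linarith
    · rw [transfer_apply_of_ne hki hkj]
      exact Or.inl le_rfl
  · rw [transfer_apply_left hij, upperSum_add, upperSum_sub, upperSum_single, upperSum_single,
      if_pos ho₁, if_neg ho₂, sub_zero]
    exact lt_add_of_pos_right _ hδ

variable [Fintype N] {q : O → ℕ} {m : ℕ} {A : Fin m → N → O → ℝ} {b : Fin m → ℝ}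

theorem isCompact_setOf_isRandomAssignment (q : O → ℕ) :
    IsCompact {x : N → O → ℝ | IsRandomAssignment q x} := by
  refine (isCompact_Icc (a := (0 : N → O → ℝ)) (b := 1)).of_isClosed_subset ?_
    fun x hx => ⟨fun i o => (hx.1 i o).1, fun i o => (hx.1 i o).2⟩
  simp only [IsRandomAssignment, Set.ofPred_and, Set.ofPred_forall]
  refine .inter ?_ (.inter ?_ ?_)
  · exact isClosed_iInter fun i => isClosed_iInter fun o =>
      (isClosed_le (by fun_prop) (by fun_prop)).inter (isClosed_le (by fun_prop) (by fun_prop))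
  · exact isClosed_iInter fun i => isClosed_eq (by fun_prop) (by fun_prop)
  · exact isClosed_iInter fun o => isClosed_le (by fun_prop) (by fun_prop)

theorem isCompact_setOf_feasible (q : O → ℕ) (A : Fin m → N → O → ℝ) (b : Fin m → ℝ) :
    IsCompact {x : N → O → ℝ | Feasible q A b x} := by
  simp only [Feasible, Set.ofPred_and, Set.ofPred_forall]
  exact (isCompact_setOf_isRandomAssignment q).inter_right <|
    isClosed_iInter fun c => isClosed_le (by fun_prop) (by fun_prop)

theorem exists_feasible_forall_leximinKey_le (pref : N → O → O → Prop)
    (hne : ∃ x, Feasible q A b x) :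
    ∃ x, Feasible q A b x ∧
      ∀ y, Feasible q A b y →
        leximinKey (cumulativeShares pref y) ≤ leximinKey (cumulativeShares pref x) :=
  exists_mem_forall_toLex_le (isCompact_setOf_feasible q A b) hne fun k =>
    ((continuous_sumSmallest k).comp (continuous_cumulativeShares pref)).upperSemicontinuous
      |>.upperSemicontinuousOn _

theorem exists_feasible_improvesAtLevel_of_envy {pref : N → O → O → Prop} {x : N → O → ℝ}
    (hx : Feasible q A b x) (hcomplete : ∀ i a b, pref i a b ∨ pref i b a)
    (htrans : ∀ i a b c, pref i a b → pref i b c → pref i a c) {i j : N}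
    (htype : SameType A i j) {o : O}
    (henvy : upperSum (pref i) (x i) o < upperSum (pref i) (x j) o) :
    ∃ y, Feasible q A b y ∧ ∃ t,
      ImprovesAtLevel t (cumulativeShares pref x) (cumulativeShares pref y) := by
  have hx_nonneg (k : N) (p : O) : 0 ≤ x k p := (hx.1.1 k p).1
  -- `o₁` is the worst object, in the eyes of `j`, that `j` receives and `i` weakly prefers to `o`.
  obtain ⟨o₁, ho₁_mem, ho₁_pos, ho₁_worst⟩ :
      ∃ o₁ ∈ ({p | pref i p o} : Finset O), 0 < x j o₁ ∧ ∀ p, pref j o₁ p →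
        upperSum (pref i) (x j) o ≤ upperSum (pref j) (x j) p :=
    exists_mem_pos_forall_sum_le_upperSum (hcomplete j) (htrans j) (hx_nonneg j) <|
      (sum_nonneg fun p _ => hx_nonneg i p).trans_lt henvy
  have hlt_sum : upperSum (pref i) (x i) o < ∑ p, x i p := by
    rw [hx.1.2.1 i, ← hx.1.2.1 j]
    exact henvy.trans_le (upperSum_le_sum (hx_nonneg j) o)
  obtain ⟨o₂, ho₂, ho₂_pos⟩ := exists_not_rel_and_pos_of_upperSum_lt_sum hlt_sum
  have ho₁ : pref i o₁ o := (mem_filter.1 ho₁_mem).2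
  have ho₁₂ : pref i o₁ o₂ := htrans i _ _ _ ho₁ ((hcomplete i o o₂).resolve_right ho₂)
  obtain ⟨δ, hδ, hδ_lt⟩ := exists_between (lt_min (lt_min ho₁_pos ho₂_pos) (sub_pos.2 henvy))
  simp only [lt_min_iff] at hδ_lt
  obtain ⟨⟨hδ₁, hδ₂⟩, hδ_gap⟩ := hδ_lt
  have hij : i ≠ j := by
    rintro rfl
    exact henvy.false
  have hj_gap (p : O) (hp : pref j o₁ p) :
      upperSum (pref i) (x i) o + δ < upperSum (pref j) (x j) p :=
    (lt_sub_iff_add_lt'.1 hδ_gap).trans_le (ho₁_worst p hp)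
  exact ⟨_, feasible_transfer_single_sub_single hx htype hδ.le hδ₁.le hδ₂.le, _,
    improvesAtLevel_transfer hij hδ (htrans i) ho₁ ho₂ ho₁₂ hj_gap⟩

end Assignment

/-- For every preference profile and every nonempty linearly constrained feasible set,
there exists a feasible random assignment that is constrained ordinally efficient
and envy-free among agents of the same type. -/
theorem exists_constrained_ordinally_efficient_and_same_type_envy_free
    {N O : Type*} [Fintype N] [Fintype O]
    (q : O → ℕ) (hq : Fintype.card N ≤ ∑ o, q o)
    (pref : N → O → O → Prop)
    (hcomplete : ∀ i a b, pref i a b ∨ pref i b a)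
    (htrans : ∀ i a b c, pref i a b → pref i b c → pref i a c)
    {m : ℕ} (A : Fin m → N → O → ℝ) (b : Fin m → ℝ)
    (hne : ∃ x, Feasible q A b x) :
    ∃ x : N → O → ℝ, Feasible q A b x ∧
      (¬ ∃ x' : N → O → ℝ, Feasible q A b x' ∧
        (∀ i, SDom (pref i) (x' i) (x i)) ∧ (∃ j, StrictSDom (pref j) (x' j) (x j))) ∧
      (∀ i j, SameType A i j → SDom (pref i) (x i) (x j)) := by
  obtain ⟨x, hx, hmax⟩ := exists_feasible_forall_leximinKey_le pref hne
  refine ⟨x, hx, ?_, fun i j hij o => ?_⟩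
  · rintro ⟨y, hy, hdom, j, -, o, hlt⟩
    have hpareto : cumulativeShares pref x < cumulativeShares pref y :=
      Pi.lt_def.2 ⟨fun a => hdom a.1 a.2, (j, o), hlt⟩
    exact (hmax y hy).not_gt (leximinKey_strictMono hpareto)
  · by_contra henvy
    obtain ⟨y, hy, t, himproves⟩ :=
      exists_feasible_improvesAtLevel_of_envy hx hcomplete htrans hij (not_le.1 henvy)
    exact (hmax y hy).not_gt himproves.leximinKey_lt
end

section
/- For every preference profile and every nonempty linearly constrained feasible set ΔC, there exists a feasible random assignment x ∈ ΔC that is envy-free among agents of the same type, i.e., x_i sd(≽_i) x_j for every pair of agents i, j of the same type. -/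
open Finset
open scoped Classical

/-!
Average a feasible assignment over each type. Within a type all constraint coefficients agree, so
averaging changes neither the column sums nor the values of the constraints, and it makes agents of
the same type receive identical allocations, which nobody can envy.
-/

open scoped BigOperators

section FiberAverage

variable {ι κ M : Type*} [Fintype ι]

lemma fiber_nonempty (t : ι → κ) (i : ι) :
    ({j | t j = t i} : Finset ι).Nonempty :=
  ⟨i, by simp⟩

variable [AddCommMonoid M] [Module ℚ≥0 M]

/-- The conditional expectation of `f` given `t`, under the uniform distribution on `ι`: at `i`, the
mean of `f` over the fiber of `t` through `i`. The types of agents are the fibers of a map `t`. -/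
noncomputable def fiberAverage (t : ι → κ) (f : ι → M) (i : ι) : M :=
  𝔼 j with t j = t i, f j

variable {t : ι → κ} {i j : ι}

lemma fiberAverage_congr (f : ι → M) (h : t i = t j) :
    fiberAverage t f i = fiberAverage t f j := by
  simp only [fiberAverage, h]

lemma fiberAverage_const (t : ι → κ) (a : M) (i : ι) : fiberAverage t (fun _ ↦ a) i = a :=
  expect_const (fiber_nonempty t i) a

lemma fiberAverage_apply {α : Type*} (t : ι → κ) (f : ι → α → M) (i : ι) (a : α) :
    fiberAverage t f i a = fiberAverage t (fun j ↦ f j a) i :=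
  map_expect (LinearMap.proj (R := ℚ≥0) (φ := fun _ : α ↦ M) a) f _

lemma sum_fiberAverage_apply {α : Type*} [Fintype α] (t : ι → κ) (f : ι → α → M) (i : ι) :
    ∑ a, fiberAverage t f i a = fiberAverage t (fun j ↦ ∑ a, f j a) i := by
  simp only [fiberAverage_apply]
  exact (expect_sum_comm _ _ _).symm

lemma sum_fiberAverage (t : ι → κ) (f : ι → M) : ∑ i, fiberAverage t f i = ∑ i, f i := by
  simp only [fiberAverage, expect, smul_sum]
  calc ∑ i, ∑ j with t j = t i, (#{k | t k = t i} : ℚ≥0)⁻¹ • f j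
      = ∑ j, ∑ i with t i = t j, (#{k | t k = t i} : ℚ≥0)⁻¹ • f j :=
        sum_comm' (by simp [eq_comm])
    _ = ∑ j, 𝔼 i with t i = t j, f j := by
        refine sum_congr rfl fun j _ ↦ ?_
        rw [expect, smul_sum]
        refine sum_congr rfl fun i hi ↦ ?_
        rw [(mem_filter.mp hi).2]
    _ = ∑ j, f j := sum_congr rfl fun j _ ↦ fiberAverage_const t (f j) j

lemma smul_fiberAverage {R : Type*} [DistribSMul R M] [SMulCommClass R ℚ≥0 M] {w : ι → R}
    (hw : ∀ i j, t i = t j → w i = w j) (f : ι → M) (i : ι) :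
    w i • fiberAverage t f i = fiberAverage t (fun j ↦ w j • f j) i := by
  rw [fiberAverage, smul_expect]
  exact expect_congr rfl fun j hj ↦ by rw [hw j i (mem_filter.mp hj).2]

lemma sum_smul_fiberAverage {R : Type*} [DistribSMul R M] [SMulCommClass R ℚ≥0 M] {w : ι → R}
    (hw : ∀ i j, t i = t j → w i = w j) (f : ι → M) :
    ∑ i, w i • fiberAverage t f i = ∑ i, w i • f i := by
  simp only [smul_fiberAverage hw, sum_fiberAverage]

end FiberAverage

section Assignment

variable {N O κ : Type*} [Fintype N] [Fintype O] {q : O → ℕ} {x : N → O → ℝ}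

protected lemma IsRandomAssignment.fiberAverage (hx : IsRandomAssignment q x) (t : N → κ) :
    IsRandomAssignment q (fiberAverage t x) := by
  obtain ⟨hbounds, hrow, hcol⟩ := hx
  refine ⟨fun i o ↦ ?_, fun i ↦ ?_, fun o ↦ ?_⟩
  · rw [fiberAverage_apply]
    exact ⟨expect_nonneg fun j _ ↦ (hbounds j o).1,
      expect_le (fiber_nonempty t i) fun j _ ↦ (hbounds j o).2⟩
  · simp only [sum_fiberAverage_apply, hrow, fiberAverage_const]
  · simpa only [fiberAverage_apply, sum_fiberAverage] using hcol o

protected lemma Feasible.fiberAverage {m : ℕ} {A : Fin m → N → O → ℝ} {b : Fin m → ℝ}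
    (hx : Feasible q A b x) {t : N → κ} (ht : ∀ i j, t i = t j → SameType A i j) :
    Feasible q A b (fiberAverage t x) := by
  refine ⟨hx.1.fiberAverage t, fun c ↦ ?_⟩
  calc ∑ i, ∑ o, A c i o * fiberAverage t x i o
      = ∑ o, ∑ i, A c i o * fiberAverage t (fun j ↦ x j o) i := by
        simp only [fiberAverage_apply]
        exact sum_comm
    _ = ∑ o, ∑ i, A c i o * x i o :=
        sum_congr rfl fun o _ ↦ sum_smul_fiberAverage (fun i j h ↦ ht i j h c o) _
    _ = ∑ i, ∑ o, A c i o * x i o := sum_comm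
    _ ≤ b c := hx.2 c

theorem exists_same_type_envy_free_general {m : ℕ} {A : Fin m → N → O → ℝ} {b : Fin m → ℝ}
    (hne : ∃ x, Feasible q A b x) :
    ∃ x : N → O → ℝ, Feasible q A b x ∧ ∀ i j, SameType A i j → x i = x j := by
  obtain ⟨x, hx⟩ := hne
  let agentType (i : N) (c : Fin m) (o : O) : ℝ := A c i o
  exact ⟨fiberAverage agentType x, hx.fiberAverage fun _ _ h c o ↦ congrFun₂ h c o,
    fun _ _ h ↦ fiberAverage_congr x (funext₂ h)⟩

end Assignment

/-- For every preference profile and every nonempty linearly constrained feasible set,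
there exists a feasible random assignment that is envy-free among agents of the same type. -/
theorem exists_same_type_envy_free
    {N O : Type*} [Fintype N] [Fintype O]
    (q : O → ℕ) (hq : Fintype.card N ≤ ∑ o, q o)
    (pref : N → O → O → Prop)
    (hcomplete : ∀ i a b, pref i a b ∨ pref i b a)
    (htrans : ∀ i a b c, pref i a b → pref i b c → pref i a c)
    {m : ℕ} (A : Fin m → N → O → ℝ) (b : Fin m → ℝ)
    (hne : ∃ x, Feasible q A b x) :
    ∃ x : N → O → ℝ, Feasible q A b x ∧
      ∀ i j, SameType A i j → SDom (pref i) (x i) (x j) := by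
  obtain ⟨x, hx, hequal⟩ := exists_same_type_envy_free_general hne
  exact ⟨x, hx, fun i j h o ↦ by rw [hequal i j h]⟩
end

section
/- Let Q = {h ∈ ℝ^n : h ≥ 0, A h ≤ b} be a nonempty polyhedron contained in the nonnegative orthant that is downward closed: whenever h ∈ Q and h' satisfies 0 ≤ h' ≤ h componentwise, then h' ∈ Q. Then there exist a matrix Ã with all entries nonnegative and a vector b̃ with all entries nonnegative such that Q = {h ∈ ℝ^n : h ≥ 0, Ã h ≤ b̃}. -/
open Finset

/-!
Keep `b` and replace `A` by its entrywise positive part `A⁺`. On the orthant `A h ≤ A⁺ h`, so the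
new system is the stronger one. Conversely, if `h` is feasible, then for each row `a` so is the
truncation of `h` to the coordinates where `a` is nonnegative, at which `a` takes the value `a⁺ h`.
-/

section NonnegPolyhedron

open Set
open scoped Matrix

/-- Downward closedness relative to the nonnegative orthant: together with `h`, the set contains
every `h'` with `0 ≤ h' ≤ h`. -/
def IsDownwardClosed {α : Type*} [Preorder α] [Zero α] (Q : Set α) : Prop :=
  ∀ ⦃h⦄, h ∈ Q → Icc 0 h ⊆ Q

variable {R ι κ : Type*} [Fintype ι]

/-- The polyhedron `{h | 0 ≤ h, A h ≤ b}` in the nonnegative orthant. The rows of `A` are indexed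
by an arbitrary, possibly infinite, type. -/
def nonnegPolyhedron [Semiring R] [Preorder R] (A : κ → ι → R) (b : κ → R) : Set (ι → R) :=
  {h | 0 ≤ h ∧ ∀ c, A c ⬝ᵥ h ≤ b c}

theorem zero_mem_nonnegPolyhedron_iff [Semiring R] [Preorder R] {A : κ → ι → R} {b : κ → R} :
    0 ∈ nonnegPolyhedron A b ↔ 0 ≤ b := by
  simp [nonnegPolyhedron, Pi.le_def]

theorem IsDownwardClosed.zero_mem_nonnegPolyhedron [Semiring R] [Preorder R]
    {A : κ → ι → R} {b : κ → R} (hdown : IsDownwardClosed (nonnegPolyhedron A b))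
    (hne : (nonnegPolyhedron A b).Nonempty) : 0 ∈ nonnegPolyhedron A b :=
  let ⟨_, hh⟩ := hne
  hdown hh ⟨le_rfl, hh.1⟩

theorem nonnegPolyhedron_posPart_subset [Ring R] [Lattice R] [IsOrderedRing R]
    (A : κ → ι → R) (b : κ → R) : nonnegPolyhedron A⁺ b ⊆ nonnegPolyhedron A b :=
  fun _ hh ↦ ⟨hh.1, fun c ↦
    (dotProduct_le_dotProduct_of_nonneg_right (le_posPart (A c)) hh.1).trans (hh.2 c)⟩

theorem posPart_dotProduct [Ring R] [LinearOrder R] (a h : ι → R) :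
    a⁺ ⬝ᵥ h = a ⬝ᵥ indicator {i | 0 ≤ a i} h := by
  refine Finset.sum_congr rfl fun i _ ↦ ?_
  by_cases ha : 0 ≤ a i <;> simp [posPart_eq_ite, ha]

theorem IsDownwardClosed.nonnegPolyhedron_subset_posPart [Ring R] [LinearOrder R]
    {A : κ → ι → R} {b : κ → R} (hdown : IsDownwardClosed (nonnegPolyhedron A b)) :
    nonnegPolyhedron A b ⊆ nonnegPolyhedron A⁺ b := by
  refine fun h hh ↦ ⟨hh.1, fun c ↦ ?_⟩
  have truncation_mem : indicator {i | 0 ≤ A c i} h ∈ nonnegPolyhedron A b :=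
    hdown hh ⟨indicator_nonneg fun i _ ↦ hh.1 i, indicator_le_self' fun i _ ↦ hh.1 i⟩
  calc
    A⁺ c ⬝ᵥ h = A c ⬝ᵥ indicator {i | 0 ≤ A c i} h := posPart_dotProduct (A c) h
    _ ≤ b c := truncation_mem.2 c

theorem downward_closed_polyhedron_nonneg_representation_general
    [Ring R] [LinearOrder R] [IsOrderedRing R] (A : κ → ι → R) (b : κ → R)
    (hne : (nonnegPolyhedron A b).Nonempty) (hdown : IsDownwardClosed (nonnegPolyhedron A b)) :
    ∃ (A' : κ → ι → R) (b' : κ → R),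
      0 ≤ A' ∧ 0 ≤ b' ∧ nonnegPolyhedron A b = nonnegPolyhedron A' b' :=
  ⟨A⁺, b, posPart_nonneg A,
    zero_mem_nonnegPolyhedron_iff.mp (hdown.zero_mem_nonnegPolyhedron hne),
    hdown.nonnegPolyhedron_subset_posPart.antisymm (nonnegPolyhedron_posPart_subset A b)⟩

end NonnegPolyhedron

/-- A nonempty, downward-closed polyhedron in the nonnegative orthant can be described
by a system of inequalities with nonnegative matrix and nonnegative right-hand side. -/
theorem downward_closed_polyhedron_nonneg_representation
    (n m : ℕ) (A : Fin m → Fin n → ℝ) (b : Fin m → ℝ)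
    (Q : Set (Fin n → ℝ))
    (hQ : Q = {h | (∀ i, 0 ≤ h i) ∧ ∀ c, ∑ i, A c i * h i ≤ b c})
    (hne : Q.Nonempty)
    (hdown : ∀ h ∈ Q, ∀ h' : Fin n → ℝ, (∀ i, 0 ≤ h' i) → (∀ i, h' i ≤ h i) → h' ∈ Q) :
    ∃ (m' : ℕ) (A' : Fin m' → Fin n → ℝ) (b' : Fin m' → ℝ),
      (∀ c i, 0 ≤ A' c i) ∧ (∀ c, 0 ≤ b' c) ∧
      Q = {h | (∀ i, 0 ≤ h i) ∧ ∀ c, ∑ i, A' c i * h i ≤ b' c} := by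
  subst hQ
  exact ⟨m, downward_closed_polyhedron_nonneg_representation_general A b hne
    fun h hh h' hh' ↦ hdown h hh h' hh'.1 hh'.2⟩
end

section
/- Let Q = {h ∈ ℝ^n : h ≥ 0, Ã h ≤ b̃} with Ã ∈ ℝ^{m×n}, b̃ ∈ ℝ^m, and suppose Q is downward closed: h ∈ Q and 0 ≤ h' ≤ h componentwise imply h' ∈ Q. Fix a constraint row c, and suppose there exists a point h̃ ∈ Q with all coordinates strictly positive at which row c is binding (Σ_i ã^c_i h̃_i = b̃^c) while every other row c' ≠ c is slack (Σ_i ã^{c'}_i h̃_i < b̃^{c'}). Then every entry of row c of Ã is nonnegative: ã^c_j ≥ 0 for all j. -/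
open Finset

/-! Setting the `j`-th coordinate of the binding point to zero keeps it in `Q`, and changes the
left-hand side of the binding constraint `c` by `- A c j * ht j`. As that side cannot increase
and `0 < ht j`, the entry `A c j` is nonnegative. -/

section DotProduct

open Function Matrix

lemma dotProduct_update_zero_add {ι R : Type*} [Fintype ι] [DecidableEq ι]
    [NonUnitalNonAssocSemiring R] (a x : ι → R) (j : ι) :
    a ⬝ᵥ update x j 0 + a j * x j = a ⬝ᵥ x := by
  have split_coordinate : update x j 0 + Pi.single j (x j) = x := by
    ext i
    obtain rfl | hij := eq_or_ne i j <;> simp [*]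
  rw [← dotProduct_single, ← dotProduct_add, split_coordinate]

variable {ι R : Type*} [Fintype ι] [Semiring R] [LinearOrder R] [IsStrictOrderedRing R]
  {a x : ι → R} {j : ι}

lemma nonneg_of_isMaxOn_dotProduct_Icc (hx : 0 ≤ x)
    (hmax : IsMaxOn (a ⬝ᵥ ·) (Set.Icc 0 x) x) (hj : 0 < x j) : 0 ≤ a j := by
  classical
  have update_mem : update x j 0 ∈ Set.Icc 0 x :=
    ⟨le_update_iff.2 ⟨le_rfl, fun i _ => hx i⟩, update_le_self_iff.2 hj.le⟩
  have dotProduct_le : a ⬝ᵥ update x j 0 ≤ a ⬝ᵥ update x j 0 + a j * x j :=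
    (hmax update_mem).trans_eq (dotProduct_update_zero_add a x j).symm
  exact nonneg_of_mul_nonneg_left ((le_add_iff_nonneg_right _).1 dotProduct_le) hj

theorem binding_row_of_downward_closed_is_nonneg_general {Q : Set (ι → R)} {β : R}
    (hdown : ∀ y ∈ Q, Set.Icc 0 y ⊆ Q) (hvalid : ∀ y ∈ Q, a ⬝ᵥ y ≤ β)
    (hx : 0 ≤ x) (hxQ : x ∈ Q) (hbind : a ⬝ᵥ x = β) (hj : 0 < x j) : 0 ≤ a j :=
  nonneg_of_isMaxOn_dotProduct_Icc hx
    (fun y hy => (hvalid y (hdown x hxQ hy)).trans_eq hbind.symm) hj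

end DotProduct

/-- If a downward-closed polyhedron `{h ≥ 0 | Ã h ≤ b̃}` has a strictly positive point at
which row `c` is the unique binding constraint, then all entries of row `c` are nonnegative. -/
theorem binding_row_of_downward_closed_is_nonneg
    (n m : ℕ) (A : Fin m → Fin n → ℝ) (b : Fin m → ℝ)
    (Q : Set (Fin n → ℝ))
    (hQ : Q = {h | (∀ i, 0 ≤ h i) ∧ ∀ c, ∑ i, A c i * h i ≤ b c})
    (hdown : ∀ h ∈ Q, ∀ h' : Fin n → ℝ, (∀ i, 0 ≤ h' i) → (∀ i, h' i ≤ h i) → h' ∈ Q)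
    (c : Fin m) (ht : Fin n → ℝ)
    (htpos : ∀ i, 0 < ht i)
    (htmem : ht ∈ Q)
    (hbind : ∑ i, A c i * ht i = b c)
    (hslack : ∀ c', c' ≠ c → ∑ i, A c' i * ht i < b c') :
    ∀ j, 0 ≤ A c j := by
  intro j
  exact binding_row_of_downward_closed_is_nonneg_general
    (fun h hh h' hh' => hdown h hh h' hh'.1 hh'.2) (fun h hh => (hQ ▸ hh).2 c)
    (fun i => (htpos i).le) htmem hbind (htpos j)
end

section
/- Let K ⊆ ℝ^d be a nonempty compact convex set and let g_1, …, g_n : ℝ^d → ℝ be linear maps. For each nonempty S ⊆ {1,…,n} define v(S) = max_{x ∈ K} min_{i ∈ S} g_i(x). Let B ⊆ {1,…,n} be nonempty with v(B) = λ, and suppose B is minimal in the sense that v(B') > λ for every nonempty proper subset B' ⊊ B. Then there is no y ∈ K such that g_i(y) ≥ λ for all i ∈ B with g_j(y) > λ for at least one j ∈ B. -/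
open Finset

/-!
The inequality `c < v S` says that some point of `K` gives every agent in `S` more than `c`.
If `y` gives all of `B` at least `v B` and gives `j` strictly more, minimality supplies a point `x`
giving all of `B \ {j}` strictly more than `v B`. Moving slightly from `y` towards `x` keeps the
strict gain of `j` and makes every other inequality strict, contradicting the definition of `v B`.
-/

section Concave

variable {𝕜 E β : Type*} [Semiring 𝕜] [PartialOrder 𝕜] [AddCommMonoid E] [SMul 𝕜 E]
  [AddCommMonoid β] [PartialOrder β] [IsOrderedCancelAddMonoid β] [Module 𝕜 β]
  [PosSMulStrictMono 𝕜 β] {K : Set E}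

theorem lt_of_mem_openSegment_of_concaveOn {f : E → β} (hf : ConcaveOn 𝕜 K f) {c : β}
    {x y z : E} (hx : x ∈ K) (hy : y ∈ K) (hcx : c ≤ f x) (hcy : c < f y)
    (hz : z ∈ openSegment 𝕜 x y) : c < f z := by
  obtain ⟨s, t, hs, ht, hst, rfl⟩ := hz
  calc
    c = s • c + t • c := (Convex.combo_self hst c).symm
    _ < s • f x + t • f y :=
      add_lt_add_of_le_of_lt (smul_le_smul_of_nonneg_left hcx hs.le)
        (smul_lt_smul_of_pos_left hcy ht)
    _ ≤ f (s • x + t • y) := hf.2 hx hy hs.le ht.le hst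

end Concave

section ConcaveField

variable {𝕜 E ι : Type*} [Field 𝕜] [LinearOrder 𝕜] [IsStrictOrderedRing 𝕜]
  [AddCommMonoid E] [SMul 𝕜 E] {K : Set E}

theorem exists_pos_weights_lt_add_mul {a c : 𝕜} (hca : c < a) (b : 𝕜) :
    ∃ s t : 𝕜, 0 < s ∧ 0 < t ∧ s + t = 1 ∧ c < s * a + t * b := by
  -- The second entry of the maximum forces `t < 1`.
  obtain ⟨t, ht, hmax⟩ := exists_pos_mul_lt (sub_pos.2 hca) (max (a - b) (a - c))
  have hb : (a - b) * t < a - c :=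
    (mul_le_mul_of_nonneg_right (le_max_left _ _) ht.le).trans_lt hmax
  have hc : (a - c) * t < a - c :=
    (mul_le_mul_of_nonneg_right (le_max_right _ _) ht.le).trans_lt hmax
  have ht_lt_one : t < 1 := (mul_lt_iff_lt_one_right (sub_pos.2 hca)).1 hc
  exact ⟨1 - t, t, sub_pos.2 ht_lt_one, ht, sub_add_cancel _ _, by linarith⟩

theorem exists_mem_openSegment_lt_of_concaveOn {f : E → 𝕜} (hf : ConcaveOn 𝕜 K f) {c : 𝕜}
    {x y : E} (hx : x ∈ K) (hy : y ∈ K) (hcx : c < f x) :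
    ∃ z ∈ openSegment 𝕜 x y, c < f z := by
  obtain ⟨s, t, hs, ht, hst, hc⟩ := exists_pos_weights_lt_add_mul hcx (f y)
  exact ⟨s • x + t • y, ⟨s, t, hs, ht, hst, rfl⟩, hc.trans_le (hf.2 hx hy hs.le ht.le hst)⟩

theorem exists_forall_lt_of_concaveOn {B : Set ι} {g : ι → E → 𝕜}
    (hg : ∀ i ∈ B, ConcaveOn 𝕜 K (g i)) {c : 𝕜} {x y : E} {j : ι} (hj : j ∈ B)
    (hx : x ∈ K) (hcx : ∀ i ∈ B, c ≤ g i x) (hcxj : c < g j x)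
    (hy : y ∈ K) (hcy : ∀ i ∈ B \ {j}, c < g i y) :
    ∃ z ∈ K, ∀ i ∈ B, c < g i z := by
  obtain ⟨z, hz, hczj⟩ := exists_mem_openSegment_lt_of_concaveOn (hg j hj) hx hy hcxj
  refine ⟨z, (hg j hj).1.openSegment_subset hx hy hz, fun i hi => ?_⟩
  obtain rfl | hij := eq_or_ne i j
  · exact hczj
  · exact lt_of_mem_openSegment_of_concaveOn (hg i hi) hx hy (hcx i hi) (hcy i ⟨hi, hij⟩) hz

end ConcaveField

theorem lt_isLUB_image_inf'_iff {α E ι : Type*} [LinearOrder α] {K : Set E} {g : ι → E → α}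
    {S : Finset ι} {hS : S.Nonempty} {a c : α}
    (ha : IsLUB ((fun x => S.inf' hS fun i => g i x) '' K) a) :
    c < a ↔ ∃ x ∈ K, ∀ i ∈ S, c < g i x := by
  simp only [lt_isLUB_iff ha, Set.exists_mem_image, lt_inf'_iff]

theorem setOf_eq_sInf_image_eq_image_inf' {α E ι : Type*} [ConditionallyCompleteLinearOrder α]
    (K : Set E) (g : ι → E → α) {S : Finset ι} (hS : S.Nonempty) :
    {r | ∃ x ∈ K, r = sInf ((fun i => g i x) '' (S : Set ι))} =
      (fun x => S.inf' hS fun i => g i x) '' K := by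
  simp only [Set.image, inf'_eq_csInf_image, eq_comm]

theorem bottleneck_lemma_abstract_general {𝕜 E ι : Type*} [Field 𝕜] [LinearOrder 𝕜]
    [IsStrictOrderedRing 𝕜] [AddCommMonoid E] [SMul 𝕜 E] {K : Set E} {g : ι → E → 𝕜}
    {v : Finset ι → 𝕜}
    (hv : ∀ (S : Finset ι) (hS : S.Nonempty),
      IsLUB ((fun x => S.inf' hS fun i => g i x) '' K) (v S))
    {B : Finset ι} (hg : ∀ i ∈ B, ConcaveOn 𝕜 K (g i))
    (hmin : ∀ B' : Finset ι, B'.Nonempty → B' ⊂ B → v B < v B') :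
    ¬ ∃ y ∈ K, (∀ i ∈ B, v B ≤ g i y) ∧ ∃ j ∈ B, v B < g j y := by
  classical
  rintro ⟨y, hy, hBy, j, hj, hjy⟩
  obtain ⟨x, hx, hBx⟩ : ∃ x ∈ K, ∀ i ∈ B.erase j, v B < g i x := by
    obtain hempty | hne := (B.erase j).eq_empty_or_nonempty
    · exact ⟨y, hy, by simp [hempty]⟩
    · exact (lt_isLUB_image_inf'_iff (hv _ hne)).1 (hmin _ hne (erase_ssubset hj))
  have hstrict : ∃ z ∈ K, ∀ i ∈ B, v B < g i z :=
    exists_forall_lt_of_concaveOn (B := B) hg hj hy hBy hjy hx (by simpa [and_comm] using hBx)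
  exact lt_irrefl _ ((lt_isLUB_image_inf'_iff (hv B ⟨j, hj⟩)).2 hstrict)

/-- Abstract bottleneck lemma: if `B` is a minimal set with maximin value `λ` over the
compact convex set `K` (with linear objectives `g i`), then no point of `K` gives every
`i ∈ B` at least `λ` with at least one strict inequality. -/
theorem bottleneck_lemma_abstract
    (d n : ℕ) (K : Set (Fin d → ℝ))
    (hKne : K.Nonempty) (hKcomp : IsCompact K) (hKconv : Convex ℝ K)
    (g : Fin n → (Fin d → ℝ) →ₗ[ℝ] ℝ)
    (v : Finset (Fin n) → ℝ)
    (hv : ∀ S : Finset (Fin n), S.Nonempty →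
      IsGreatest {r | ∃ x ∈ K, r = sInf ((fun i => g i x) '' (S : Set (Fin n)))} (v S))
    (B : Finset (Fin n)) (hB : B.Nonempty) (lam : ℝ) (hvB : v B = lam)
    (hmin : ∀ B' : Finset (Fin n), B'.Nonempty → B' ⊂ B → lam < v B') :
    ¬ ∃ y ∈ K, (∀ i ∈ B, lam ≤ g i y) ∧ ∃ j ∈ B, lam < g j y := by
  subst hvB
  exact bottleneck_lemma_abstract_general
    (fun S hS => setOf_eq_sInf_image_eq_image_inf' K (fun i => g i) hS ▸ (hv S hS).isLUB)
    (fun i _ => (g i).concaveOn hKconv) hmin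
end

section
/- Fix finite agent and object sets N, O, quotas q_o ∈ ℕ with Σ_o q_o ≥ |N|, a constraint matrix A ∈ ℝ^{m×(N×O)} and vector b ∈ ℝ^m, a finite set F of triples (i, T, γ) with i ∈ N, T ⊆ O, γ ∈ ℝ, and for each agent i a subset T_i ⊆ O. Let K = {x ∈ ΔD : Ax ≤ b and Σ_{o∈T} x_{i,o} ≥ γ for all (i,T,γ) ∈ F}, assume K is nonempty, and for nonempty S ⊆ N set v(S) = max_{x∈K} min_{i∈S} Σ_{o∈T_i} x_{i,o}. Let B ⊆ N be nonempty with v(B) = λ and v(B') > λ for every nonempty proper subset B' ⊊ B. Then there exists no y ∈ K such that Σ_{o∈T_i} y_{i,o} ≥ λ for all i ∈ B with strict inequality for at least one i ∈ B. -/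
open Finset
open scoped Classical

/-!
Suppose `y` gave every agent of `B` at least `λ` and agent `j ∈ B` strictly more. Since
`v (B \ {j}) > λ` unless `B = {j}`, some feasible `x` gives every agent of `B \ {j}` more than `λ`.
Moving from `y` a little towards `x` keeps `j` above `λ` and, by concavity of the shares, lifts
everyone else in `B` strictly above `λ`, contradicting `v B = λ`.
-/

theorem exists_mem_Ioc_lt_convexCombination {𝕜 : Type*} [Field 𝕜] [LinearOrder 𝕜]
    [IsStrictOrderedRing 𝕜] {c t : 𝕜} (hct : c < t) (s : 𝕜) :
    ∃ ε ∈ Set.Ioc (0 : 𝕜) 1, c < ε * s + (1 - ε) * t := by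
  obtain ⟨δ, hδ, hδt⟩ := exists_pos_mul_lt (sub_pos.2 hct) |t - s|
  refine ⟨min δ 1, ⟨lt_min hδ one_pos, min_le_right δ 1⟩, ?_⟩
  have hloss : (t - s) * min δ 1 < t - c :=
    calc (t - s) * min δ 1 ≤ |t - s| * min δ 1 := by gcongr; exact le_abs_self _
      _ ≤ |t - s| * δ := by gcongr; exact min_le_left δ 1
      _ < t - c := hδt
  linear_combination hloss

theorem exists_forall_mem_insert_lt_of_concaveOn {𝕜 E ι : Type*} [Field 𝕜] [LinearOrder 𝕜]
    [IsStrictOrderedRing 𝕜] [AddCommMonoid E] [SMul 𝕜 E] {K : Set E} {u : ι → E → 𝕜} {s : Set ι}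
    {j : ι} {c : 𝕜} {x y : E} (hu : ∀ i ∈ insert j s, ConcaveOn 𝕜 K (u i)) (hx : x ∈ K)
    (hy : y ∈ K) (hxs : ∀ i ∈ s, c < u i x) (hys : ∀ i ∈ s, c ≤ u i y) (hyj : c < u j y) :
    ∃ z ∈ K, ∀ i ∈ insert j s, c < u i z := by
  obtain ⟨ε, ⟨hε₀, hε₁⟩, hεj⟩ := exists_mem_Ioc_lt_convexCombination hyj (u j x)
  have hε₁' : 0 ≤ 1 - ε := sub_nonneg.2 hε₁
  have hsum : ε + (1 - ε) = 1 := add_sub_cancel ε 1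
  refine ⟨ε • x + (1 - ε) • y,
    (hu j (Set.mem_insert j s)).1 hx hy hε₀.le hε₁' hsum, fun i hi => ?_⟩
  suffices hlt : c < ε * u i x + (1 - ε) * u i y from
    hlt.trans_le ((hu i hi).2 hx hy hε₀.le hε₁' hsum)
  rcases hi with rfl | hi
  · exact hεj
  · calc c = ε * c + (1 - ε) * c := by ring
      _ < ε * u i x + (1 - ε) * c := by gcongr; exact hxs i hi
      _ ≤ ε * u i x + (1 - ε) * u i y := by gcongr; exact hys i hi

theorem lt_iff_exists_forall_lt_of_isLUB_inf' {α E ι : Type*} [LinearOrder α] {K : Set E}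
    {u : ι → E → α} {S : Finset ι} {hS : S.Nonempty} {w c : α}
    (hw : IsLUB ((fun x => S.inf' hS fun i => u i x) '' K) w) :
    c < w ↔ ∃ x ∈ K, ∀ i ∈ S, c < u i x := by
  simp only [lt_isLUB_iff hw, Set.exists_mem_image, lt_inf'_iff]

theorem bottleneck_lemma_general {𝕜 E ι : Type*} [Field 𝕜] [LinearOrder 𝕜]
    [IsStrictOrderedRing 𝕜] [AddCommMonoid E] [SMul 𝕜 E] {K : Set E} {u : ι → E → 𝕜}
    {v : Finset ι → 𝕜} {B : Finset ι} (hu : ∀ i ∈ B, ConcaveOn 𝕜 K (u i))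
    (hv : ∀ (S : Finset ι) (hS : S.Nonempty),
      IsLUB ((fun x => S.inf' hS fun i => u i x) '' K) (v S))
    (hmin : ∀ B' : Finset ι, B'.Nonempty → B' ⊂ B → v B < v B') :
    ¬ ∃ y ∈ K, (∀ i ∈ B, v B ≤ u i y) ∧ ∃ j ∈ B, v B < u j y := by
  rintro ⟨y, hy, hyB, j, hj, hyj⟩
  obtain ⟨x, hx, hxB⟩ : ∃ x ∈ K, ∀ i ∈ B.erase j, v B < u i x := by
    rcases (B.erase j).eq_empty_or_nonempty with hempty | hne
    · exact ⟨y, hy, by simp [hempty]⟩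
    · exact (lt_iff_exists_forall_lt_of_isLUB_inf' (hv _ hne)).1 (hmin _ hne (erase_ssubset hj))
  have hinsert : insert j (B.erase j : Set ι) = B := by
    rw [← coe_insert, insert_erase hj]
  obtain ⟨z, hz, hzB⟩ : ∃ z ∈ K, ∀ i ∈ insert j (B.erase j : Set ι), v B < u i z :=
    exists_forall_mem_insert_lt_of_concaveOn (by rwa [hinsert]) hx hy hxB
      (fun i hi => hyB i (mem_of_mem_erase hi)) hyj
  rw [hinsert] at hzB
  exact lt_irrefl (v B) ((lt_iff_exists_forall_lt_of_isLUB_inf' (hv B ⟨j, hj⟩)).2 ⟨z, hz, hzB⟩)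

theorem isLinearMap_sum_mul_apply {R N O : Type*} [CommSemiring R] [Fintype N] [Fintype O]
    (a : N → O → R) : IsLinearMap R fun x : N → O → R => ∑ i, ∑ o, a i o * x i o where
  map_add x y := by simp only [Pi.add_apply, mul_add, sum_add_distrib]
  map_smul r x := by simp only [Pi.smul_apply, smul_eq_mul, mul_sum, mul_left_comm]

theorem isLinearMap_sum_row {R N O : Type*} [Semiring R] (i : N) (T : Finset O) :
    IsLinearMap R fun x : N → O → R => ∑ o ∈ T, x i o where
  map_add x y := by simp only [Pi.add_apply, sum_add_distrib]
  map_smul r x := by simp only [Pi.smul_apply, smul_sum]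

theorem isLinearMap_sum_column {R N O : Type*} [Semiring R] (S : Finset N) (o : O) :
    IsLinearMap R fun x : N → O → R => ∑ i ∈ S, x i o where
  map_add x y := by simp only [Pi.add_apply, sum_add_distrib]
  map_smul r x := by simp only [Pi.smul_apply, smul_sum]

theorem convex_setOf_isRandomAssignment {N O : Type*} [Fintype N] [Fintype O] (q : O → ℕ) :
    Convex ℝ {x : N → O → ℝ | IsRandomAssignment q x} := by
  have hbounds : Convex ℝ {x : N → O → ℝ | ∀ i o, 0 ≤ x i o ∧ x i o ≤ 1} := by
    simpa only [Set.Icc, Pi.le_def, Pi.zero_apply, Pi.one_apply, forall_and]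
      using convex_Icc (𝕜 := ℝ) (0 : N → O → ℝ) 1
  have hrows : Convex ℝ {x : N → O → ℝ | ∀ i, ∑ o, x i o = 1} := by
    rw [Set.ofPred_forall]
    exact convex_iInter fun i => convex_hyperplane (isLinearMap_sum_row i univ) 1
  have hcolumns : Convex ℝ {x : N → O → ℝ | ∀ o, ∑ i, x i o ≤ (q o : ℝ)} := by
    rw [Set.ofPred_forall]
    exact convex_iInter fun o => convex_halfSpace_le (isLinearMap_sum_column univ o) (q o : ℝ)
  exact hbounds.inter (hrows.inter hcolumns)

/-- The set `K` of random assignments `x` with `A x ≤ b` that respect the promises in `F`, where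
`(i, T, γ) ∈ F` promises agent `i` a total share of at least `γ` from the objects in `T`. The rows
of `A` are indexed by an arbitrary type `κ`. -/
def feasibleRegion {N O κ : Type*} [Fintype N] [Fintype O] (q : O → ℕ) (A : κ → N → O → ℝ)
    (b : κ → ℝ) (F : Set (N × Finset O × ℝ)) : Set (N → O → ℝ) :=
  {x | IsRandomAssignment q x ∧ (∀ c, ∑ i, ∑ o, A c i o * x i o ≤ b c) ∧
    ∀ t ∈ F, t.2.2 ≤ ∑ o ∈ t.2.1, x t.1 o}

theorem convex_feasibleRegion {N O κ : Type*} [Fintype N] [Fintype O] (q : O → ℕ)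
    (A : κ → N → O → ℝ) (b : κ → ℝ) (F : Set (N × Finset O × ℝ)) :
    Convex ℝ (feasibleRegion q A b F) := by
  have hconstraints : Convex ℝ {x : N → O → ℝ | ∀ c, ∑ i, ∑ o, A c i o * x i o ≤ b c} := by
    rw [Set.ofPred_forall]
    exact convex_iInter fun c => convex_halfSpace_le (isLinearMap_sum_mul_apply (A c)) (b c)
  have hpromises : Convex ℝ {x : N → O → ℝ | ∀ t ∈ F, t.2.2 ≤ ∑ o ∈ t.2.1, x t.1 o} := by
    simp only [Set.ofPred_forall]
    exact convex_iInter₂ fun t _ => convex_halfSpace_ge (isLinearMap_sum_row t.1 t.2.1) t.2.2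
  exact (convex_setOf_isRandomAssignment q).inter (hconstraints.inter hpromises)

theorem concaveOn_sum_row {R N O : Type*} [Semiring R] [PartialOrder R] {K : Set (N → O → R)}
    (hK : Convex R K) (i : N) (T : Finset O) : ConcaveOn R K fun x => ∑ o ∈ T, x i o :=
  (isLinearMap_sum_row i T).mk'.concaveOn hK

/-- Bottleneck lemma for the constrained serial rule: if `B` is a minimal set of agents
with maximin value `λ` for the LP feasible region `K`, then no feasible `y` gives every
agent of `B` at least `λ` from her top indifference classes with one strict inequality. -/
theorem bottleneck_lemma
    {N O : Type*} [Fintype N] [Fintype O]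
    (q : O → ℕ) (hq : Fintype.card N ≤ ∑ o, q o)
    {m : ℕ} (A : Fin m → N → O → ℝ) (b : Fin m → ℝ)
    (F : Finset (N × Finset O × ℝ))
    (T : N → Finset O)
    (K : Set (N → O → ℝ))
    (hK : K = {x | IsRandomAssignment q x ∧ (∀ c, ∑ i, ∑ o, A c i o * x i o ≤ b c) ∧
      ∀ t ∈ F, t.2.2 ≤ ∑ o ∈ t.2.1, x t.1 o})
    (hKne : K.Nonempty)
    (v : Finset N → ℝ)
    (hv : ∀ S : Finset N, S.Nonempty →
      IsGreatest {r | ∃ x ∈ K, r = sInf ((fun i => ∑ o ∈ T i, x i o) '' (S : Set N))} (v S))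
    (B : Finset N) (hB : B.Nonempty) (lam : ℝ) (hvB : v B = lam)
    (hmin : ∀ B' : Finset N, B'.Nonempty → B' ⊂ B → lam < v B') :
    ¬ ∃ y ∈ K, (∀ i ∈ B, lam ≤ ∑ o ∈ T i, y i o) ∧ ∃ j ∈ B, lam < ∑ o ∈ T j, y j o := by
  have hconv : Convex ℝ K := hK ▸ convex_feasibleRegion q A b F
  subst hvB
  refine bottleneck_lemma_general (fun i _ => concaveOn_sum_row hconv i (T i))
    (fun S hS => ?_) hmin
  simpa only [inf'_eq_csInf_image, Set.image, eq_comm] using (hv S hS).isLUB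
end
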